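/- Let C ∈ RH∞^{n×n} be real-rational and suppose that the positive feedback interconnection [P,C] is stable for every strictly proper negative imaginary (NI) P ∈ R^{n×n} that has no double pole at the origin. Then for each ω ∈ (0,∞) there exists ε > 0 (depending on ω) such that j(C(jω) − C(jω)*) ≥ ε C(jω)* C(jω). -/

import Mathlib

open Matrix Polynomial Filter Topology
open scoped ComplexOrder

noncomputable section

namespace NIControl

/-- Evaluate a real-rational function at a complex point (junk value at poles). -/
def evalC (f : RatFunc ℝ) (s : ℂ) : ℂ :=
  f.eval (algebraMap ℝ ℂ) s

/-- `s` is a pole of the real-rational function `f`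
(the reduced denominator vanishes at `s`). -/
def IsPoleAt (f : RatFunc ℝ) (s : ℂ) : Prop :=
  f.denom.eval₂ (algebraMap ℝ ℂ) s = 0

variable {n : ℕ}

/-- Pointwise evaluation of a real-rational transfer matrix at a complex point. -/
def evalM (G : Matrix (Fin n) (Fin n) (RatFunc ℝ)) (s : ℂ) : Matrix (Fin n) (Fin n) ℂ :=
  Matrix.of fun i j => evalC (G i j) s

/-- Pointwise evaluation of a real-rational transfer matrix at a real point. -/
def evalR (G : Matrix (Fin n) (Fin n) (RatFunc ℝ)) (x : ℝ) : Matrix (Fin n) (Fin n) ℝ :=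
  Matrix.of fun i j => (G i j).eval (RingHom.id ℝ) x

/-- Value at `s = ∞` of a proper real-rational function. -/
def atInfinity (f : RatFunc ℝ) : ℝ :=
  if f.num.degree = f.denom.degree then f.num.leadingCoeff / f.denom.leadingCoeff else 0

/-- The instantaneous gain `G(∞)` of a proper real-rational transfer matrix. -/
def evalInf (G : Matrix (Fin n) (Fin n) (RatFunc ℝ)) : Matrix (Fin n) (Fin n) ℝ :=
  Matrix.of fun i j => atInfinity (G i j)

/-- The matrix `G` has a pole at `s`. -/
def HasPole (G : Matrix (Fin n) (Fin n) (RatFunc ℝ)) (s : ℂ) : Prop :=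
  ∃ i j, IsPoleAt (G i j) s

/-- All entries of `G` are proper rational functions. -/
def Proper (G : Matrix (Fin n) (Fin n) (RatFunc ℝ)) : Prop :=
  ∀ i j, (G i j).num.degree ≤ (G i j).denom.degree

/-- All entries of `G` are strictly proper rational functions. -/
def StrictlyProper (G : Matrix (Fin n) (Fin n) (RatFunc ℝ)) : Prop :=
  ∀ i j, (G i j).num.degree < (G i j).denom.degree

/-- The pole of `G` at the origin (if any) is at most simple. -/
def NoDoubleOriginPole (G : Matrix (Fin n) (Fin n) (RatFunc ℝ)) : Prop :=
  ∀ i j, (G i j).denom.rootMultiplicity 0 ≤ 1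

/-- Membership in `RH∞`: proper and no poles in the closed right-half complex plane. -/
def MemRHinf {m : Type*} [Fintype m] (G : Matrix m m (RatFunc ℝ)) : Prop :=
  (∀ i j, (G i j).num.degree ≤ (G i j).denom.degree) ∧
  ∀ s : ℂ, 0 ≤ s.re → ∀ i j, ¬ IsPoleAt (G i j) s

/-- The point `jω` on the imaginary axis. -/
def jw (ω : ℝ) : ℂ := Complex.I * (ω : ℂ)

/-- The negative-imaginary frequency kernel `j (M − M*)`. -/
def niKer (M : Matrix (Fin n) (Fin n) ℂ) : Matrix (Fin n) (Fin n) ℂ :=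
  Complex.I • (M - Mᴴ)

/-- Negative imaginary (NI) real-rational transfer matrix. -/
def IsNI (G : Matrix (Fin n) (Fin n) (RatFunc ℝ)) : Prop :=
  Proper G ∧
  (∀ s : ℂ, 0 < s.re → ¬ HasPole G s) ∧
  (∀ ω : ℝ, 0 < ω → ¬ HasPole G (jw ω) → (niKer (evalM G (jw ω))).PosSemidef) ∧
  (∀ ω : ℝ, 0 < ω → HasPole G (jw ω) →
    ∃ R : Matrix (Fin n) (Fin n) ℂ, R.PosSemidef ∧
      Tendsto (fun s : ℂ => (s - jw ω) • Complex.I • evalM G s) (𝓝[≠] jw ω) (𝓝 R)) ∧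
  (HasPole G 0 →
    (∀ k : ℕ, 3 ≤ k → Tendsto (fun s : ℂ => s ^ k • evalM G s) (𝓝[≠] 0) (𝓝 0)) ∧
    ∃ R : Matrix (Fin n) (Fin n) ℂ, R.PosSemidef ∧
      Tendsto (fun s : ℂ => s ^ 2 • evalM G s) (𝓝[≠] 0) (𝓝 R))

/-- Strictly negative imaginary (SNI) real-rational transfer matrix. -/
def IsSNI (G : Matrix (Fin n) (Fin n) (RatFunc ℝ)) : Prop :=
  MemRHinf G ∧ ∀ ω : ℝ, 0 < ω → (niKer (evalM G (jw ω))).PosDef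

/-- Positive real (passive) real-rational transfer matrix. -/
def IsPositiveReal (G : Matrix (Fin n) (Fin n) (RatFunc ℝ)) : Prop :=
  MemRHinf G ∧ ∀ ω : ℝ, 0 ≤ ω → (evalM G (jw ω) + (evalM G (jw ω))ᴴ).PosSemidef

/-- Output strictly passive real-rational transfer matrix. -/
def IsOSP (G : Matrix (Fin n) (Fin n) (RatFunc ℝ)) : Prop :=
  MemRHinf G ∧ ∃ ε : ℝ, 0 < ε ∧ ∀ ω : ℝ, 0 ≤ ω →
    (evalM G (jw ω) + (evalM G (jw ω))ᴴ -
      (ε : ℂ) • ((evalM G (jw ω))ᴴ * evalM G (jw ω))).PosSemidef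

/-- Stability of the positive feedback interconnection `[P, C]`:
`[I; C] (I − P C)⁻¹ [I, P] ∈ RH∞`. -/
def FeedbackStable (P C : Matrix (Fin n) (Fin n) (RatFunc ℝ)) : Prop :=
  ((1 : Matrix (Fin n) (Fin n) (RatFunc ℝ)) - P * C).det ≠ 0 ∧
  MemRHinf (Matrix.fromBlocks
    (1 - P * C)⁻¹ ((1 - P * C)⁻¹ * P)
    (C * (1 - P * C)⁻¹) (C * (1 - P * C)⁻¹ * P))

/-- All eigenvalues of the complex matrix `M` are real and less than `c`. -/
def eigsRealAndLT (M : Matrix (Fin n) (Fin n) ℂ) (c : ℝ) : Prop :=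
  ∀ μ ∈ spectrum ℂ M, μ.im = 0 ∧ μ.re < c

/-- The (real) eigenvalues of the real matrix `M` are all real and its largest
eigenvalue is less than `c`. -/
def maxEigLT (M : Matrix (Fin n) (Fin n) ℝ) (c : ℝ) : Prop :=
  eigsRealAndLT (M.map (Complex.ofReal)) c

/-- Loewner order `A ≤ B` on real matrices. -/
def LoewnerLE (A B : Matrix (Fin n) (Fin n) ℝ) : Prop := (B - A).PosSemidef

/-- Strict Loewner order `A < B` on real matrices. -/
def LoewnerLT (A B : Matrix (Fin n) (Fin n) ℝ) : Prop := (B - A).PosDef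

/-!
If `C(jω) x ≠ 0` while `x* C(jω) x` has nonnegative imaginary part, some strictly proper NI matrix
`P` without pole at the origin satisfies `P(jω) C(jω) x = x`; the loop `[P, C]` is then singular at
`jω`, contradicting stability. Such a `P` is a sum of NI systems tuned to `ω`: with `y = C(jω) x`,
a first-order lag with corner frequency `ω` provides the skew-Hermitian part of the required value,
as `Im (y* x) ≤ 0`, and two undamped resonators, one tuned above and one below `ω`, together attain
any Hermitian value at `jω`. Hence the form of `j(C(jω) - C(jω)*)` is positive off the kernel of
`C(jω)`, so in finite dimension it dominates a positive multiple of `C(jω)* C(jω)`.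
-/

section LinearAlgebra

theorem exists_comp_eq_of_ker_le_ker {K U V W : Type*} [DivisionRing K] [AddCommGroup U]
    [Module K U] [AddCommGroup V] [Module K V] [AddCommGroup W] [Module K W] {f : V →ₗ[K] W}
    {g : V →ₗ[K] U} (h : LinearMap.ker f ≤ LinearMap.ker g) : ∃ φ : W →ₗ[K] U, φ ∘ₗ f = g := by
  obtain ⟨ψ, hψ⟩ := LinearMap.exists_leftInverse_of_injective
    ((LinearMap.ker f).liftQ f le_rfl) (Submodule.ker_liftQ_eq_bot _ _ _ le_rfl)
  refine ⟨(LinearMap.ker f).liftQ g h ∘ₗ ψ, LinearMap.ext fun v => ?_⟩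
  have hψv : ψ (f v) = (LinearMap.ker f).mkQ v :=
    LinearMap.congr_fun hψ ((LinearMap.ker f).mkQ v)
  simp [hψv]

theorem posSemidef_of_tendsto {m 𝕜 α : Type*} [Finite m] [RCLike 𝕜] {f : Filter α} [f.NeBot]
    {A : α → Matrix m m 𝕜} {B : Matrix m m 𝕜} (hAB : Tendsto A f (𝓝 B))
    (hA : ∀ᶠ a in f, (A a).PosSemidef) : B.PosSemidef := by
  have := Fintype.ofFinite m
  refine .of_dotProduct_mulVec_nonneg ?_ fun x => ?_
  · have hstar : Tendsto (fun a => (A a)ᴴ) f (𝓝 Bᴴ) :=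
      ((continuous_id.matrix_conjTranspose).tendsto B).comp hAB
    exact tendsto_nhds_unique (hstar.congr' (hA.mono fun a ha => ha.isHermitian)) hAB
  · have hform : Continuous fun M : Matrix m m 𝕜 => star x ⬝ᵥ (M *ᵥ x) :=
      continuous_const.dotProduct (continuous_id.matrix_mulVec continuous_const)
    exact ge_of_tendsto ((hform.tendsto B).comp hAB)
      (hA.mono fun a ha => ha.dotProduct_mulVec_nonneg x)

open scoped MatrixOrder Matrix.Norms.L2Operator in
theorem exists_posSemidef_add_smul_one {m : Type*} [Finite m] [DecidableEq m] {A : Matrix m m ℂ}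
    (hA : A.IsHermitian) : ∃ c : ℝ, 0 < c ∧ (A + (c : ℂ) • (1 : Matrix m m ℂ)).PosSemidef := by
  have := Fintype.ofFinite m
  have hnorm : (A + (‖A‖ : ℂ) • (1 : Matrix m m ℂ)).PosSemidef := by
    simpa [Algebra.algebraMap_eq_smul_one] using
      le_iff.1 (IsSelfAdjoint.neg_algebraMap_norm_le_self (a := A) hA)
  refine ⟨‖A‖ + 1, by positivity, ?_⟩
  simpa [add_smul, add_assoc] using hnorm.add .one

variable {m k l : Type*} [Fintype m] [Fintype k]

theorem exists_eq_mul_of_forall_mulVec_eq_zero {K : Type*} [Field K] {B : Matrix m k K}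
    {M : Matrix l k K} (h : ∀ x, B *ᵥ x = 0 → M *ᵥ x = 0) : ∃ L : Matrix l m K, M = L * B := by
  classical
  obtain ⟨φ, hφ⟩ := exists_comp_eq_of_ker_le_ker (f := B.mulVecLin) (g := M.mulVecLin) h
  refine ⟨LinearMap.toMatrix' φ, ext_of_mulVec_single fun j => ?_⟩
  rw [← mulVec_mulVec, LinearMap.toMatrix'_mulVec]
  exact (LinearMap.congr_fun hφ _).symm

theorem exists_isHermitian_mulVec_eq {K : Type*} [Field K] [StarRing K] {x y : m → K}
    (hy : star y ⬝ᵥ y ≠ 0) (hxy : IsSelfAdjoint (star y ⬝ᵥ x)) :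
    ∃ A : Matrix m m K, A.IsHermitian ∧ A *ᵥ y = x := by
  set r := star y ⬝ᵥ y with hr
  set t := star y ⬝ᵥ x with ht
  have hr_star : star r = r := (star_dotProduct y y).symm
  have ht_star : star t = t := hxy
  have hxy_comm : star x ⬝ᵥ y = t := by rw [star_dotProduct, ← ht, ht_star]
  refine ⟨r⁻¹ • (vecMulVec x (star y) + vecMulVec y (star x)) -
    (t * r⁻¹ * r⁻¹) • vecMulVec y (star y), ?_, ?_⟩
  · simp only [IsHermitian, conjTranspose_sub, conjTranspose_smul, conjTranspose_add,
      conjTranspose_vecMulVec, star_star, star_mul', star_inv₀, hr_star, ht_star]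
    rw [add_comm (vecMulVec x (star y))]
  · ext i
    simp only [sub_mulVec, smul_mulVec, add_mulVec, vecMulVec_mulVec, hxy_comm, ← hr,
      Pi.sub_apply, Pi.add_apply, Pi.smul_apply, MulOpposite.smul_eq_mul_unop,
      MulOpposite.unop_op, smul_eq_mul]
    field_simp
    ring

open scoped MatrixOrder in
theorem exists_posSemidef_sub_smul_conjTranspose_mul_self {H : Matrix m m ℂ} (hH : H.PosSemidef)
    {M : Matrix k m ℂ} (hHM : ∀ x, star x ⬝ᵥ (H *ᵥ x) = 0 → M *ᵥ x = 0) :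
    ∃ ε : ℝ, 0 < ε ∧ (H - (ε : ℂ) • (Mᴴ * M)).PosSemidef := by
  classical
  obtain ⟨B, rfl⟩ : ∃ B : Matrix m m ℂ, H = Bᴴ * B :=
    CStarAlgebra.nonneg_iff_eq_star_mul_self.mp hH.nonneg
  obtain ⟨L, rfl⟩ : ∃ L : Matrix k m ℂ, M = L * B :=
    exists_eq_mul_of_forall_mulVec_eq_zero fun x hx => hHM x <| by
      rw [← mulVec_mulVec, hx, mulVec_zero, dotProduct_zero]
  obtain ⟨c, hc, hL⟩ :=
    exists_posSemidef_add_smul_one (isHermitian_conjTranspose_mul_self L).neg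
  have hL_le : (1 - ((c⁻¹ : ℝ) : ℂ) • (Lᴴ * L)).PosSemidef := by
    have hc_ne : (c : ℂ) ≠ 0 := by exact_mod_cast hc.ne'
    convert hL.smul (inv_nonneg.2 hc.le) using 1
    rw [← Complex.coe_smul, smul_add, smul_smul, Complex.ofReal_inv, inv_mul_cancel₀ hc_ne]
    simp [sub_eq_neg_add]
  refine ⟨c⁻¹, inv_pos.2 hc, ?_⟩
  convert hL_le.conjTranspose_mul_mul_same B using 1
  simp [mul_sub, sub_mul, Matrix.mul_assoc]

end LinearAlgebra

section FrequencyKernel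

theorem niKer_add (A B : Matrix (Fin n) (Fin n) ℂ) : niKer (A + B) = niKer A + niKer B := by
  simp only [niKer, conjTranspose_add, ← smul_add]
  congr 1
  abel

theorem niKer_smul_of_isHermitian {A : Matrix (Fin n) (Fin n) ℂ} (hA : A.IsHermitian) (z : ℂ) :
    niKer (z • A) = (-2 * z.im) • A := by
  have hcoeff : Complex.I * (z - star z) = ((-2 * z.im : ℝ) : ℂ) := by
    rw [Complex.star_def, Complex.sub_conj]
    push_cast
    linear_combination (2 * z.im : ℂ) * Complex.I_sq
  rw [niKer, conjTranspose_smul, hA.eq, ← sub_smul, smul_smul, hcoeff, Complex.coe_smul]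

theorem isHermitian_niKer (A : Matrix (Fin n) (Fin n) ℂ) : (niKer A).IsHermitian := by
  simp [IsHermitian, niKer, ← smul_neg]

theorem continuous_niKer :
    Continuous (niKer : Matrix (Fin n) (Fin n) ℂ → Matrix (Fin n) (Fin n) ℂ) := by
  unfold niKer
  fun_prop

theorem star_dotProduct_niKer_mulVec (A : Matrix (Fin n) (Fin n) ℂ) (x : Fin n → ℂ) :
    star x ⬝ᵥ (niKer A *ᵥ x) = ((-2 * (star x ⬝ᵥ (A *ᵥ x)).im : ℝ) : ℂ) := by
  have hadj : star x ⬝ᵥ (Aᴴ *ᵥ x) = star (star x ⬝ᵥ (A *ᵥ x)) := by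
    rw [star_dotProduct, star_mulVec, conjTranspose_conjTranspose, ← dotProduct_mulVec]
  rw [niKer, smul_mulVec, sub_mulVec, dotProduct_smul, dotProduct_sub, hadj,
    smul_eq_mul, Complex.star_def, Complex.sub_conj]
  push_cast
  linear_combination (2 * (star x ⬝ᵥ (A *ᵥ x)).im : ℂ) * Complex.I_sq

theorem exists_posSemidef_niKer_sub_smul {A : Matrix (Fin n) (Fin n) ℂ}
    (hA : ∀ x, A *ᵥ x ≠ 0 → (star x ⬝ᵥ (A *ᵥ x)).im < 0) :
    ∃ ε : ℝ, 0 < ε ∧ (niKer A - (ε : ℂ) • (Aᴴ * A)).PosSemidef := by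
  have hform : ∀ x, (star x ⬝ᵥ (A *ᵥ x)).im ≤ 0 := fun x => by
    by_cases hx : A *ᵥ x = 0
    · simp [hx]
    · exact (hA x hx).le
  refine exists_posSemidef_sub_smul_conjTranspose_mul_self
    (.of_dotProduct_mulVec_nonneg (isHermitian_niKer A) fun x => ?_) fun x hx => ?_
  · rw [star_dotProduct_niKer_mulVec]
    exact_mod_cast mul_nonneg_of_nonpos_of_nonpos (by norm_num) (hform x)
  · by_contra hAx
    rw [star_dotProduct_niKer_mulVec, Complex.ofReal_eq_zero] at hx
    linarith [hA x hAx]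

end FrequencyKernel

section Evaluation

/-- The subsemiring of real-rational functions that have no pole at `s`. -/
def regularAt (s : ℂ) : Subsemiring (RatFunc ℝ) where
  carrier := {f | ¬ IsPoleAt f s}
  zero_mem' := by simp [IsPoleAt]
  one_mem' := by simp [IsPoleAt]
  add_mem' {f g} hf hg h := by
    have hprod := eval₂_eq_zero_of_dvd_of_eval₂_eq_zero _ _ (RatFunc.denom_add_dvd f g) h
    rw [eval₂_mul] at hprod
    exact mul_ne_zero hf hg hprod
  mul_mem' {f g} hf hg h := by
    have hprod := eval₂_eq_zero_of_dvd_of_eval₂_eq_zero _ _ (RatFunc.denom_mul_dvd f g) h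
    rw [eval₂_mul] at hprod
    exact mul_ne_zero hf hg hprod

variable {G H : Matrix (Fin n) (Fin n) (RatFunc ℝ)} {s : ℂ}

theorem not_hasPole_iff_mem_matrix_regularAt : ¬ HasPole G s ↔ G ∈ (regularAt s).matrix := by
  simp only [HasPole, not_exists]
  rfl

theorem not_hasPole_one : ¬ HasPole (1 : Matrix (Fin n) (Fin n) (RatFunc ℝ)) s :=
  not_hasPole_iff_mem_matrix_regularAt.2 (one_mem _)

theorem not_hasPole_add (hG : ¬ HasPole G s) (hH : ¬ HasPole H s) : ¬ HasPole (G + H) s := by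
  rw [not_hasPole_iff_mem_matrix_regularAt] at *
  exact add_mem hG hH

theorem not_hasPole_mul (hG : ¬ HasPole G s) (hH : ¬ HasPole H s) : ¬ HasPole (G * H) s := by
  rw [not_hasPole_iff_mem_matrix_regularAt] at *
  exact mul_mem hG hH

theorem evalC_sum {ι : Type*} (t : Finset ι) (f : ι → RatFunc ℝ)
    (hf : ∀ i ∈ t, f i ∈ regularAt s) : evalC (∑ i ∈ t, f i) s = ∑ i ∈ t, evalC (f i) s := by
  classical
  induction t using Finset.induction_on with
  | empty => simp [evalC]
  | insert a t ha ih =>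
    rw [Finset.forall_mem_insert] at hf
    rw [Finset.sum_insert ha, Finset.sum_insert ha, ← ih hf.2]
    exact RatFunc.eval_add _ _ hf.1 (sum_mem hf.2 : _ ∈ regularAt s)

theorem evalM_one : evalM (1 : Matrix (Fin n) (Fin n) (RatFunc ℝ)) s = 1 := by
  ext i j
  obtain rfl | hij := eq_or_ne i j <;> simp [evalM, evalC, *]

theorem evalM_add (hG : ¬ HasPole G s) (hH : ¬ HasPole H s) :
    evalM (G + H) s = evalM G s + evalM H s := by
  rw [not_hasPole_iff_mem_matrix_regularAt] at hG hH
  ext i j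
  exact RatFunc.eval_add _ _ (hG i j) (hH i j)

theorem evalM_mul (hG : ¬ HasPole G s) (hH : ¬ HasPole H s) :
    evalM (G * H) s = evalM G s * evalM H s := by
  rw [not_hasPole_iff_mem_matrix_regularAt] at hG hH
  ext i j
  simp only [evalM, of_apply, mul_apply]
  rw [evalC_sum _ _ fun k _ => mul_mem (hG i k) (hH k j)]
  exact Finset.sum_congr rfl fun k _ => RatFunc.eval_mul _ _ (hG i k) (hH k j)

theorem eventually_eval₂_ne_zero {p : ℝ[X]} (hp : p ≠ 0) (s : ℂ) :
    ∀ᶠ z in 𝓝[≠] s, p.eval₂ (algebraMap ℝ ℂ) z ≠ 0 := by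
  have hfin := finite_setOfPred_isRoot (p := p.map (algebraMap ℝ ℂ))
    (Polynomial.map_ne_zero hp)
  filter_upwards [nhdsNE_le_cofinite s hfin.compl_mem_cofinite] with z hz
  rwa [eval₂_eq_eval_map]

theorem eventually_not_hasPole (G : Matrix (Fin n) (Fin n) (RatFunc ℝ)) (s : ℂ) :
    ∀ᶠ z in 𝓝[≠] s, ¬ HasPole G z := by
  simp only [HasPole, not_exists, eventually_all]
  exact fun i j => eventually_eval₂_ne_zero (G i j).denom_ne_zero s

theorem continuousAt_evalM (hG : ¬ HasPole G s) : ContinuousAt (evalM G) s := by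
  simp only [HasPole, not_exists] at hG
  refine continuousAt_pi.2 fun i => continuousAt_pi.2 fun j => ?_
  have hcont (p : ℝ[X]) : ContinuousAt (fun z => p.eval₂ (algebraMap ℝ ℂ) z) s :=
    (p.continuous_eval₂ _).continuousAt
  exact (hcont _).div (hcont _) (hG i j)

end Evaluation

theorem FeedbackStable.eq_zero_of_evalM_mulVec_eq {P G : Matrix (Fin n) (Fin n) (RatFunc ℝ)}
    {s : ℂ} (hPG : FeedbackStable P G) (hs : 0 ≤ s.re) (hP : ¬ HasPole P s) (hG : ¬ HasPole G s)
    {x : Fin n → ℂ} (hx : evalM P s *ᵥ (evalM G s *ᵥ x) = x) : x = 0 := by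
  obtain ⟨hdet, -, hstable⟩ := hPG
  set T := (1 - P * G)⁻¹
  have hT : ¬ HasPole T s := fun ⟨i, j, hij⟩ => hstable s hs (Sum.inl i) (Sum.inl j) hij
  have hT_eq : T = 1 + T * (P * G) := by
    have hinv : T * (1 - P * G) = 1 := nonsing_inv_mul _ (isUnit_iff_ne_zero.mpr hdet)
    rw [← hinv]
    noncomm_ring
  have hloop := not_hasPole_mul hP hG
  have heval : evalM T s *ᵥ x = x + evalM T s *ᵥ x := calc
    evalM T s *ᵥ x = evalM (1 + T * (P * G)) s *ᵥ x := by rw [← hT_eq]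
    _ = (1 + evalM T s * (evalM P s * evalM G s)) *ᵥ x := by
      rw [evalM_add not_hasPole_one (not_hasPole_mul hT hloop), evalM_mul hT hloop,
        evalM_mul hP hG, evalM_one]
    _ = x + evalM T s *ᵥ x := by
      rw [add_mulVec, one_mulVec, ← mulVec_mulVec, ← mulVec_mulVec, hx]
  simpa using heval

section Properness

variable {K : Type*} [Field K]

theorem degree_num_le_degree_denom_iff {f : RatFunc K} {p q : K[X]} (hq : q ≠ 0)
    (hf : f.num * q = p * f.denom) : f.num.degree ≤ f.denom.degree ↔ p.degree ≤ q.degree := by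
  have hdeg : f.num.degree + q.degree = p.degree + f.denom.degree := by
    rw [← degree_mul, hf, degree_mul]
  rw [← WithBot.add_le_add_iff_right (degree_ne_bot.2 hq), hdeg, add_comm,
    WithBot.add_le_add_iff_left (degree_ne_bot.2 f.denom_ne_zero)]

theorem degree_num_lt_degree_denom_iff {f : RatFunc K} {p q : K[X]} (hq : q ≠ 0)
    (hf : f.num * q = p * f.denom) : f.num.degree < f.denom.degree ↔ p.degree < q.degree := by
  have hdeg : f.num.degree + q.degree = p.degree + f.denom.degree := by
    rw [← degree_mul, hf, degree_mul]
  rw [← WithBot.add_lt_add_iff_right (degree_ne_bot.2 hq), hdeg, add_comm,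
    WithBot.add_lt_add_iff_left (degree_ne_bot.2 f.denom_ne_zero)]

variable {G H : Matrix (Fin n) (Fin n) (RatFunc ℝ)}

theorem Proper.add (hG : Proper G) (hH : Proper H) : Proper (G + H) := fun i j => by
  have hGd := (G i j).denom_ne_zero
  have hHd := (H i j).denom_ne_zero
  refine (degree_num_le_degree_denom_iff (mul_ne_zero hGd hHd) (RatFunc.num_denom_add _ _)).2
    ((degree_add_le _ _).trans (max_le ?_ ?_)) <;> rw [degree_mul, degree_mul]
  · exact add_le_add_left (hG i j) _
  · exact add_le_add_right (hH i j) _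

theorem StrictlyProper.add (hG : StrictlyProper G) (hH : StrictlyProper H) :
    StrictlyProper (G + H) := fun i j => by
  have hGd := (G i j).denom_ne_zero
  have hHd := (H i j).denom_ne_zero
  refine (degree_num_lt_degree_denom_iff (mul_ne_zero hGd hHd) (RatFunc.num_denom_add _ _)).2
    ((degree_add_le _ _).trans_lt (max_lt ?_ ?_)) <;> rw [degree_mul, degree_mul]
  · exact WithBot.add_lt_add_right (degree_ne_bot.2 hHd) (hG i j)
  · exact WithBot.add_lt_add_left (degree_ne_bot.2 hGd) (hH i j)

theorem StrictlyProper.proper (hG : StrictlyProper G) : Proper G :=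
  fun i j => (hG i j).le

theorem noDoubleOriginPole_of_not_hasPole_zero (hG : ¬ HasPole G 0) : NoDoubleOriginPole G := by
  intro i j
  have hroot : ¬ (G i j).denom.IsRoot 0 := fun h => hG ⟨i, j, by
    simpa [IsPoleAt, h.eq_zero] using eval₂_at_apply (p := (G i j).denom) (algebraMap ℝ ℂ) 0⟩
  rw [rootMultiplicity_eq_zero hroot]
  exact zero_le_one

end Properness

section NegativeImaginary

theorem re_jw (ω : ℝ) : (jw ω).re = 0 := by simp [jw]

theorem sq_jw (ω : ℝ) : jw ω ^ 2 = -(ω : ℂ) ^ 2 := by simp [jw, mul_pow]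

theorem continuous_jw : Continuous jw := by
  unfold jw
  fun_prop

theorem injective_jw : Function.Injective jw := fun a b h => by simpa [jw] using h

theorem tendsto_jw_nhdsNE (ω : ℝ) : Tendsto jw (𝓝[≠] ω) (𝓝[≠] jw ω) :=
  continuous_jw.continuousAt.continuousWithinAt.tendsto_nhdsWithin
    fun _ hv => injective_jw.ne hv

variable {G H : Matrix (Fin n) (Fin n) (RatFunc ℝ)}

theorem posSemidef_niKer_of_eventually {ω : ℝ} (hG : ¬ HasPole G (jw ω))
    (hpos : ∀ᶠ v in 𝓝[≠] ω, (niKer (evalM G (jw v))).PosSemidef) :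
    (niKer (evalM G (jw ω))).PosSemidef :=
  posSemidef_of_tendsto ((continuous_niKer.tendsto _).comp <|
    (continuousAt_evalM hG).tendsto.comp <|
      (tendsto_jw_nhdsNE ω).mono_right nhdsWithin_le_nhds) hpos

theorem tendsto_smul_evalM_zero {s : ℂ} (hG : ¬ HasPole G s) {φ : ℂ → ℂ} (hφ : ContinuousAt φ s)
    (hφs : φ s = 0) : Tendsto (fun z => φ z • evalM G z) (𝓝[≠] s) (𝓝 0) := by
  have hlim := hφ.tendsto.smul (continuousAt_evalM hG).tendsto
  rw [hφs, zero_smul] at hlim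
  exact hlim.mono_left nhdsWithin_le_nhds

theorem tendsto_smul_evalM_add {s : ℂ} {φ : ℂ → ℂ} {R T : Matrix (Fin n) (Fin n) ℂ}
    (hG : Tendsto (fun z => φ z • evalM G z) (𝓝[≠] s) (𝓝 R))
    (hH : Tendsto (fun z => φ z • evalM H z) (𝓝[≠] s) (𝓝 T)) :
    Tendsto (fun z => φ z • evalM (G + H) z) (𝓝[≠] s) (𝓝 (R + T)) := by
  refine (hG.add hH).congr' ?_
  filter_upwards [eventually_not_hasPole G s, eventually_not_hasPole H s] with z hGz hHz
  rw [evalM_add hGz hHz, smul_add]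

theorem IsNI.exists_tendsto_residue (hG : IsNI G) {ω : ℝ} (hω : 0 < ω) :
    ∃ R : Matrix (Fin n) (Fin n) ℂ, R.PosSemidef ∧
      Tendsto (fun s => (s - jw ω) • Complex.I • evalM G s) (𝓝[≠] jw ω) (𝓝 R) := by
  by_cases hpole : HasPole G (jw ω)
  · exact hG.2.2.2.1 ω hω hpole
  · refine ⟨0, .zero, ?_⟩
    simp only [smul_smul]
    exact tendsto_smul_evalM_zero hpole (by fun_prop) (by simp)

theorem IsNI.tendsto_pow_smul_evalM_zero (hG : IsNI G) {k : ℕ} (hk : 3 ≤ k) :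
    Tendsto (fun s => s ^ k • evalM G s) (𝓝[≠] 0) (𝓝 0) := by
  by_cases hpole : HasPole G 0
  · exact (hG.2.2.2.2 hpole).1 k hk
  · exact tendsto_smul_evalM_zero hpole (by fun_prop) (zero_pow (by lia))

theorem IsNI.exists_tendsto_sq_smul_evalM (hG : IsNI G) :
    ∃ R : Matrix (Fin n) (Fin n) ℂ, R.PosSemidef ∧
      Tendsto (fun s => s ^ 2 • evalM G s) (𝓝[≠] 0) (𝓝 R) := by
  by_cases hpole : HasPole G 0
  · exact (hG.2.2.2.2 hpole).2
  · exact ⟨0, .zero, tendsto_smul_evalM_zero hpole (by fun_prop) (by simp)⟩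

theorem IsNI.posSemidef_niKer_evalM_add (hG : IsNI G) (hH : IsNI H) {ω : ℝ} (hω : 0 < ω)
    (hpole : ¬ HasPole (G + H) (jw ω)) : (niKer (evalM (G + H) (jw ω))).PosSemidef := by
  -- Poles of the summands may cancel at `jω`, so the kernel there is a limit of nearby ones.
  refine posSemidef_niKer_of_eventually hpole ?_
  filter_upwards [(tendsto_jw_nhdsNE ω).eventually (eventually_not_hasPole G _),
    (tendsto_jw_nhdsNE ω).eventually (eventually_not_hasPole H _),
    nhdsWithin_le_nhds (eventually_gt_nhds hω)] with v hGv hHv hv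
  rw [evalM_add hGv hHv, niKer_add]
  exact (hG.2.2.1 v hv hGv).add (hH.2.2.1 v hv hHv)

theorem IsNI.add (hG : IsNI G) (hH : IsNI H) : IsNI (G + H) := by
  refine ⟨hG.1.add hH.1, fun s hs => not_hasPole_add (hG.2.1 s hs) (hH.2.1 s hs),
    fun ω hω hpole => hG.posSemidef_niKer_evalM_add hH hω hpole, fun ω hω _ => ?_,
    fun _ => ⟨fun k hk => ?_, ?_⟩⟩
  · obtain ⟨R, hR, hGR⟩ := hG.exists_tendsto_residue hω
    obtain ⟨T, hT, hHT⟩ := hH.exists_tendsto_residue hω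
    refine ⟨R + T, hR.add hT, ?_⟩
    simp only [smul_smul] at hGR hHT ⊢
    exact tendsto_smul_evalM_add hGR hHT
  · simpa using tendsto_smul_evalM_add (hG.tendsto_pow_smul_evalM_zero hk)
      (hH.tendsto_pow_smul_evalM_zero hk)
  · obtain ⟨R, hR, hGR⟩ := hG.exists_tendsto_sq_smul_evalM
    obtain ⟨T, hT, hHT⟩ := hH.exists_tendsto_sq_smul_evalM
    exact ⟨R + T, hR.add hT, tendsto_smul_evalM_add hGR hHT⟩

end NegativeImaginary

section MatrixFraction

/-- The transfer matrix `N / D` with polynomial numerator matrix `N` and scalar denominator `D`;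
the fraction need not be in lowest terms. -/
def matrixFraction (N : Matrix (Fin n) (Fin n) ℝ[X]) (D : ℝ[X]) :
    Matrix (Fin n) (Fin n) (RatFunc ℝ) :=
  of fun i j => algebraMap ℝ[X] (RatFunc ℝ) (N i j) / algebraMap ℝ[X] (RatFunc ℝ) D

variable {N : Matrix (Fin n) (Fin n) ℝ[X]} {D : ℝ[X]} {s : ℂ}

theorem not_hasPole_matrixFraction (hD : D.eval₂ (algebraMap ℝ ℂ) s ≠ 0) :
    ¬ HasPole (matrixFraction N D) s := fun ⟨_, _, hij⟩ =>
  hD (eval₂_eq_zero_of_dvd_of_eval₂_eq_zero _ _ (RatFunc.denom_div_dvd _ D) hij)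

theorem evalM_matrixFraction (hD : D.eval₂ (algebraMap ℝ ℂ) s ≠ 0) :
    evalM (matrixFraction N D) s =
      (D.eval₂ (algebraMap ℝ ℂ) s)⁻¹ • N.map (eval₂ (algebraMap ℝ ℂ) s) := by
  ext i j
  have hD_ne : D ≠ 0 := by
    rintro rfl
    exact hD (eval₂_zero _ _)
  have hdenom : (matrixFraction N D i j).denom.eval₂ (algebraMap ℝ ℂ) s ≠ 0 := fun h =>
    not_hasPole_matrixFraction hD ⟨i, j, h⟩
  have hcross := congrArg (eval₂ (algebraMap ℝ ℂ) s) <|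
    (RatFunc.num_mul_eq_mul_denom_iff (x := matrixFraction N D i j) hD_ne).mpr rfl
  rw [eval₂_mul, eval₂_mul] at hcross
  simp only [evalM, evalC, RatFunc.eval, of_apply, Matrix.smul_apply, map_apply,
    smul_eq_mul]
  rw [div_eq_iff hdenom, mul_assoc, ← hcross]
  field_simp

theorem strictlyProper_matrixFraction (hND : ∀ i j, (N i j).degree < D.degree) :
    StrictlyProper (matrixFraction N D) := fun i j => by
  have hD : D ≠ 0 := ne_zero_of_degree_gt (hND i j)
  exact (degree_num_lt_degree_denom_iff hD ((RatFunc.num_mul_eq_mul_denom_iff hD).mpr rfl)).2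
    (hND i j)

end MatrixFraction

section Admissible

/-- The uncertainties used below to destabilise a controller: strictly proper NI transfer matrices
without any pole at the origin. -/
structure IsAdmissible (P : Matrix (Fin n) (Fin n) (RatFunc ℝ)) : Prop where
  isNI : IsNI P
  strictlyProper : StrictlyProper P
  not_hasPole_zero : ¬ HasPole P 0

theorem IsAdmissible.add {P Q : Matrix (Fin n) (Fin n) (RatFunc ℝ)} (hP : IsAdmissible P)
    (hQ : IsAdmissible Q) : IsAdmissible (P + Q) where
  isNI := hP.isNI.add hQ.isNI
  strictlyProper := hP.strictlyProper.add hQ.strictlyProper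
  not_hasPole_zero := not_hasPole_add hP.not_hasPole_zero hQ.not_hasPole_zero

end Admissible

section Lag

/-- The first-order lag `R / (s + p)`. -/
def lag (p : ℝ) (R : Matrix (Fin n) (Fin n) ℝ) : Matrix (Fin n) (Fin n) (RatFunc ℝ) :=
  matrixFraction (R.map Polynomial.C) (X + Polynomial.C p)

variable {p : ℝ} {R : Matrix (Fin n) (Fin n) ℝ} {s : ℂ}

theorem not_hasPole_lag (hs : s + p ≠ 0) : ¬ HasPole (lag p R) s :=
  not_hasPole_matrixFraction (by simpa using hs)

theorem evalM_lag (hs : s + p ≠ 0) :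
    evalM (lag p R) s = (s + p)⁻¹ • R.map Complex.ofReal := by
  rw [lag, evalM_matrixFraction (by simpa using hs)]
  ext i j
  simp

theorem strictlyProper_lag : StrictlyProper (lag p R) :=
  strictlyProper_matrixFraction fun i j => by
    rw [degree_X_add_C]
    exact degree_C_le.trans_lt one_pos

theorem add_ofReal_ne_zero_of_re_nonneg (hp : 0 < p) (hs : 0 ≤ s.re) : s + p ≠ 0 := fun h => by
  have hre := congrArg Complex.re h
  simp only [Complex.add_re, Complex.ofReal_re, Complex.zero_re] at hre
  linarith

theorem isAdmissible_lag (hp : 0 < p) (hR : (R.map Complex.ofReal).PosSemidef) :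
    IsAdmissible (lag p R) := by
  have hpole : ∀ s : ℂ, 0 ≤ s.re → ¬ HasPole (lag p R) s := fun s hs =>
    not_hasPole_lag (add_ofReal_ne_zero_of_re_nonneg hp hs)
  refine ⟨⟨strictlyProper_lag.proper, fun s hs => hpole s hs.le, fun ω hω _ => ?_,
    fun ω _ h => absurd h (hpole _ (re_jw ω).ge), fun h => absurd h (hpole 0 le_rfl)⟩,
    strictlyProper_lag, hpole 0 le_rfl⟩
  rw [evalM_lag (add_ofReal_ne_zero_of_re_nonneg hp (re_jw ω).ge),
    niKer_smul_of_isHermitian hR.isHermitian]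
  refine hR.smul ?_
  have him : (jw ω + p).im = ω := by simp [jw]
  rw [Complex.inv_im, him, neg_div, neg_mul_neg]
  exact mul_nonneg zero_le_two (div_nonneg hω.le (Complex.normSq_nonneg _))

end Lag

section Resonator

/-- The undamped second-order system `(S + s K) / (s² + a²)`. -/
def resonator (a : ℝ) (S K : Matrix (Fin n) (Fin n) ℝ) : Matrix (Fin n) (Fin n) (RatFunc ℝ) :=
  matrixFraction (of fun i j => Polynomial.C (S i j) + Polynomial.C (K i j) * X)
    (X ^ 2 + Polynomial.C (a ^ 2))

variable {a : ℝ} {S K : Matrix (Fin n) (Fin n) ℝ} {s : ℂ}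

theorem not_hasPole_resonator (hs : s ^ 2 + (a : ℂ) ^ 2 ≠ 0) : ¬ HasPole (resonator a S K) s :=
  not_hasPole_matrixFraction (by simpa using hs)

theorem evalM_resonator (hs : s ^ 2 + (a : ℂ) ^ 2 ≠ 0) :
    evalM (resonator a S K) s =
      (s ^ 2 + (a : ℂ) ^ 2)⁻¹ • (S.map Complex.ofReal + s • K.map Complex.ofReal) := by
  rw [resonator, evalM_matrixFraction (by simpa using hs)]
  ext i j
  simp [mul_comm s]

theorem strictlyProper_resonator : StrictlyProper (resonator a S K) :=
  strictlyProper_matrixFraction fun i j => by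
    have hdenom : (X ^ 2 + Polynomial.C (a ^ 2) : ℝ[X]).degree = 2 := by compute_degree!
    have hnum : (Polynomial.C (S i j) + Polynomial.C (K i j) * X).degree ≤ 1 := by compute_degree
    rw [hdenom]
    exact hnum.trans_lt (by norm_num)

theorem sq_add_sq_eq_sub_jw_mul_add_jw (s : ℂ) (a : ℝ) :
    s ^ 2 + (a : ℂ) ^ 2 = (s - jw a) * (s + jw a) := by
  linear_combination sq_jw a

theorem sq_add_sq_ne_zero_of_re_pos (hs : 0 < s.re) (a : ℝ) : s ^ 2 + (a : ℂ) ^ 2 ≠ 0 := by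
  rw [sq_add_sq_eq_sub_jw_mul_add_jw]
  refine mul_ne_zero ?_ ?_ <;> refine fun h => hs.ne' ?_ <;>
    simpa [re_jw] using congrArg Complex.re h

theorem sq_jw_add_sq_ne_zero {ω a : ℝ} (hω : 0 < ω) (ha : 0 < a) (h : ω ≠ a) :
    jw ω ^ 2 + (a : ℂ) ^ 2 ≠ 0 := by
  have hsq : a ^ 2 ≠ ω ^ 2 := fun h_sq => h ((sq_eq_sq₀ ha.le hω.le).1 h_sq).symm
  rw [sq_jw, neg_add_eq_sub]
  exact_mod_cast sub_ne_zero.2 hsq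

theorem isHermitian_map_add_jw_smul_map (ha : a ≠ 0)
    (h : (S.map Complex.ofReal + jw a • K.map Complex.ofReal).IsHermitian) (ω : ℝ) :
    (S.map Complex.ofReal + jw ω • K.map Complex.ofReal).IsHermitian := by
  ext i j
  have hS : S j i = S i j := by simpa [jw] using congrArg Complex.re (h.apply i j)
  have hK : -K j i = K i j := by simpa [jw, ha, ← mul_neg] using congrArg Complex.im (h.apply i j)
  simp [jw, hS, ← hK]

theorem niKer_evalM_resonator {ω : ℝ} (hω : jw ω ^ 2 + (a : ℂ) ^ 2 ≠ 0)
    (h : (S.map Complex.ofReal + jw ω • K.map Complex.ofReal).IsHermitian) :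
    niKer (evalM (resonator a S K) (jw ω)) = 0 := by
  have hreal : (jw ω ^ 2 + (a : ℂ) ^ 2)⁻¹ = (((-ω ^ 2 + a ^ 2)⁻¹ : ℝ) : ℂ) := by
    rw [sq_jw]
    push_cast
    rfl
  rw [evalM_resonator hω, niKer_smul_of_isHermitian h, hreal, Complex.ofReal_im, mul_zero,
    zero_smul]

theorem eventually_sq_add_sq_ne_zero (a : ℝ) (s : ℂ) :
    ∀ᶠ z in 𝓝[≠] s, z ^ 2 + (a : ℂ) ^ 2 ≠ 0 := by
  have hp : (X ^ 2 + Polynomial.C (a ^ 2) : ℝ[X]) ≠ 0 := X_pow_add_C_ne_zero two_pos _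
  simpa using eventually_eval₂_ne_zero hp s

theorem tendsto_residue_resonator (ha : 0 < a) :
    Tendsto (fun s => (s - jw a) • Complex.I • evalM (resonator a S K) s) (𝓝[≠] jw a)
      (𝓝 ((2 * a)⁻¹ • (S.map Complex.ofReal + jw a • K.map Complex.ofReal))) := by
  have hne : jw a + jw a ≠ 0 := by simpa [jw, ← two_mul] using ha.ne'
  let F : ℂ → Matrix (Fin n) (Fin n) ℂ := fun s =>
    (Complex.I * (s + jw a)⁻¹) • (S.map Complex.ofReal + s • K.map Complex.ofReal)
  have hF : ContinuousAt F (jw a) := by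
    have hscalar : ContinuousAt (fun s : ℂ => Complex.I * (s + jw a)⁻¹) (jw a) := by
      fun_prop (disch := assumption)
    have hmatrix : ContinuousAt (fun s : ℂ => S.map Complex.ofReal + s • K.map Complex.ofReal)
        (jw a) := by fun_prop
    exact hscalar.smul hmatrix
  have hFa : F (jw a) = (2 * a)⁻¹ • (S.map Complex.ofReal + jw a • K.map Complex.ofReal) := by
    have hcoeff : Complex.I * (jw a + jw a)⁻¹ = ((2 * a)⁻¹ : ℝ) := by
      rw [← div_eq_mul_inv, div_eq_iff hne, jw]
      push_cast
      field_simp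
      ring
    simp only [F]
    rw [hcoeff, Complex.coe_smul]
  rw [← hFa]
  refine (hF.tendsto.mono_left nhdsWithin_le_nhds).congr' ?_
  filter_upwards [eventually_sq_add_sq_ne_zero a (jw a)] with s hs
  rw [evalM_resonator hs, smul_smul, smul_smul]
  rw [sq_add_sq_eq_sub_jw_mul_add_jw] at hs ⊢
  have hsub := left_ne_zero_of_mul hs
  have hcoeff : (s - jw a) * Complex.I * ((s - jw a) * (s + jw a))⁻¹ =
      Complex.I * (s + jw a)⁻¹ := by field_simp
  rw [hcoeff]

theorem isAdmissible_resonator (ha : 0 < a)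
    (hpos : (S.map Complex.ofReal + jw a • K.map Complex.ofReal).PosSemidef) :
    IsAdmissible (resonator a S K) := by
  have hzero : ¬ HasPole (resonator a S K) 0 := not_hasPole_resonator (by simpa using ha.ne')
  refine ⟨⟨strictlyProper_resonator.proper,
    fun s hs => not_hasPole_resonator (sq_add_sq_ne_zero_of_re_pos hs a), fun ω _ hpole => ?_,
    fun ω hω hpole => ?_, fun h => absurd h hzero⟩, strictlyProper_resonator, hzero⟩
  · refine posSemidef_niKer_of_eventually hpole ?_
    filter_upwards [(tendsto_jw_nhdsNE ω).eventually (eventually_sq_add_sq_ne_zero a _)] with v hv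
    rw [niKer_evalM_resonator hv (isHermitian_map_add_jw_smul_map ha.ne' hpos.isHermitian v)]
    exact .zero
  · obtain rfl : ω = a := by
      by_contra hne
      exact not_hasPole_resonator (sq_jw_add_sq_ne_zero hω ha hne) hpole
    exact ⟨_, hpos.smul (by positivity), tendsto_residue_resonator ha⟩

end Resonator

section Interpolation

variable {ω : ℝ}

theorem map_ofReal_add_jw_smul_map_ofReal_rescale (S K : Matrix (Fin n) (Fin n) ℝ) (c r t ω : ℝ) :
    ((r * ω) • (S + c • 1)).map Complex.ofReal + jw (t * ω) • (r • K).map Complex.ofReal =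
      (r * ω) • (S.map Complex.ofReal + jw t • K.map Complex.ofReal +
        (c : ℂ) • (1 : Matrix (Fin n) (Fin n) ℂ)) := by
  ext i j
  have hone : (1 : Matrix (Fin n) (Fin n) ℂ) i j = ((1 : Matrix (Fin n) (Fin n) ℝ) i j : ℂ) := by
    simp [one_apply, apply_ite]
  simp only [jw, Matrix.add_apply, Matrix.smul_apply, map_apply, smul_eq_mul, Complex.real_smul,
    hone]
  push_cast
  ring

theorem map_ofReal_smul_one (r : ℝ) : (r • (1 : Matrix (Fin n) (Fin n) ℝ)).map Complex.ofReal =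
    r • (1 : Matrix (Fin n) (Fin n) ℂ) := by
  ext i j
  obtain rfl | hij := eq_or_ne i j <;> simp [*]

theorem map_re_add_jw_one_smul_map_im (A : Matrix (Fin n) (Fin n) ℂ) :
    (A.map Complex.re).map Complex.ofReal + jw 1 • (A.map Complex.im).map Complex.ofReal = A := by
  ext i j
  simp [jw, mul_comm Complex.I]

theorem exists_isAdmissible_evalM_eq_add_smul_one (hω : 0 < ω) {A : Matrix (Fin n) (Fin n) ℂ}
    (hA : A.IsHermitian) :
    ∃ c : ℝ, 0 < c ∧ ∃ P : Matrix (Fin n) (Fin n) (RatFunc ℝ),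
      IsAdmissible P ∧ ¬ HasPole P (jw ω) ∧ evalM P (jw ω) = A + (c : ℂ) • 1 := by
  set S := A.map Complex.re
  set K := A.map Complex.im
  have hA_eq : S.map Complex.ofReal + jw 1 • K.map Complex.ofReal = A :=
    map_re_add_jw_one_smul_map_im A
  obtain ⟨c, hc, hpos⟩ := exists_posSemidef_add_smul_one <|
    isHermitian_map_add_jw_smul_map one_ne_zero (hA_eq.symm ▸ hA) 2
  have hne := sq_jw_add_sq_ne_zero (a := 2 * ω) hω (by positivity) (by linarith)
  -- The resonance `2ω` lies above `ω`, so the value at `jω` is a positive multiple of the numerator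
  -- there, while the shift by `c` makes the residue, taken at `2jω`, positive semidefinite.
  refine ⟨c, hc, resonator (2 * ω) ((3 * ω * ω) • (S + c • 1)) ((3 * ω) • K),
    isAdmissible_resonator (by positivity) ?_, not_hasPole_resonator hne, ?_⟩
  · rw [map_ofReal_add_jw_smul_map_ofReal_rescale]
    exact hpos.smul (by positivity)
  · have hdenom : (jw ω ^ 2 + ((2 * ω : ℝ) : ℂ) ^ 2)⁻¹ = (((3 * ω * ω)⁻¹ : ℝ) : ℂ) := by
      rw [sq_jw]
      push_cast
      ring
    have hnum := map_ofReal_add_jw_smul_map_ofReal_rescale S K c (3 * ω) 1 ω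
    rw [one_mul, hA_eq] at hnum
    rw [evalM_resonator hne, hdenom, hnum, Complex.coe_smul, inv_smul_smul₀ (by positivity)]

theorem exists_isAdmissible_evalM_eq_neg_smul_one (hω : 0 < ω) {c : ℝ} (hc : 0 ≤ c) :
    ∃ P : Matrix (Fin n) (Fin n) (RatFunc ℝ),
      IsAdmissible P ∧ ¬ HasPole P (jw ω) ∧ evalM P (jw ω) = -((c : ℂ) • 1) := by
  have hne := sq_jw_add_sq_ne_zero (a := ω / 2) hω (by positivity) (by linarith)
  have hmap_zero : (0 : Matrix (Fin n) (Fin n) ℝ).map Complex.ofReal = 0 :=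
    Matrix.map_zero _ Complex.ofReal_zero
  -- The resonance `ω / 2` lies below `ω`, so the value at `jω` is negative.
  refine ⟨resonator (ω / 2) ((3 * ω ^ 2 / 4 * c) • 1) 0,
    isAdmissible_resonator (by positivity) ?_, not_hasPole_resonator hne, ?_⟩
  · rw [map_ofReal_smul_one, hmap_zero, smul_zero, add_zero]
    exact PosSemidef.one.smul (by positivity)
  · have hvalue : (jw ω ^ 2 + ((ω / 2 : ℝ) : ℂ) ^ 2)⁻¹ * ((3 * ω ^ 2 / 4 * c : ℝ) : ℂ) = -c := by
      rw [inv_mul_eq_iff_eq_mul₀ hne, sq_jw]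
      push_cast
      ring
    rw [evalM_resonator hne, map_ofReal_smul_one, hmap_zero, smul_zero, add_zero,
      ← Complex.coe_smul, smul_smul, hvalue, neg_smul]

theorem exists_isAdmissible_evalM_eq_of_isHermitian (hω : 0 < ω) {A : Matrix (Fin n) (Fin n) ℂ}
    (hA : A.IsHermitian) :
    ∃ P : Matrix (Fin n) (Fin n) (RatFunc ℝ),
      IsAdmissible P ∧ ¬ HasPole P (jw ω) ∧ evalM P (jw ω) = A := by
  obtain ⟨c, hc, P, hP, hPω, hP_eq⟩ := exists_isAdmissible_evalM_eq_add_smul_one hω hA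
  obtain ⟨Q, hQ, hQω, hQ_eq⟩ := exists_isAdmissible_evalM_eq_neg_smul_one (n := n) hω hc.le
  refine ⟨P + Q, hP.add hQ, not_hasPole_add hPω hQω, ?_⟩
  rw [evalM_add hPω hQω, hP_eq, hQ_eq, add_neg_cancel_right]

theorem exists_isAdmissible_evalM_eq_mul_one_sub_I_smul_one (hω : 0 < ω) {d : ℝ} (hd : 0 ≤ d) :
    ∃ P : Matrix (Fin n) (Fin n) (RatFunc ℝ),
      IsAdmissible P ∧ ¬ HasPole P (jw ω) ∧ evalM P (jw ω) = (d * (1 - Complex.I)) • 1 := by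
  have hne := add_ofReal_ne_zero_of_re_nonneg hω (re_jw ω).ge
  refine ⟨lag ω ((2 * ω * d) • 1), isAdmissible_lag hω ?_, not_hasPole_lag hne, ?_⟩
  · rw [map_ofReal_smul_one]
    exact PosSemidef.one.smul (by positivity)
  · have hvalue : (jw ω + ω)⁻¹ * ((2 * ω * d : ℝ) : ℂ) = d * (1 - Complex.I) := by
      rw [inv_mul_eq_iff_eq_mul₀ hne, jw]
      push_cast
      linear_combination (ω * d : ℂ) * Complex.I_sq
    rw [evalM_lag hne, map_ofReal_smul_one, ← Complex.coe_smul, smul_smul, hvalue]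

theorem exists_isAdmissible_evalM_mulVec_eq (hω : 0 < ω) {x y : Fin n → ℂ} (hy : y ≠ 0)
    (hxy : (star y ⬝ᵥ x).im ≤ 0) :
    ∃ P : Matrix (Fin n) (Fin n) (RatFunc ℝ),
      IsAdmissible P ∧ ¬ HasPole P (jw ω) ∧ evalM P (jw ω) *ᵥ y = x := by
  have hyy_pos : 0 < star y ⬝ᵥ y := dotProduct_star_self_pos_iff.2 hy
  obtain ⟨r, hr_pos, hr⟩ := RCLike.pos_iff_exists_ofReal.1 hyy_pos
  set d := -(star y ⬝ᵥ x).im / r with hd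
  obtain ⟨P, hP, hPω, hP_eq⟩ := exists_isAdmissible_evalM_eq_mul_one_sub_I_smul_one (n := n) hω
    (div_nonneg (neg_nonneg.2 hxy) hr_pos.le : 0 ≤ d)
  have hself : IsSelfAdjoint (star y ⬝ᵥ (x - (d * (1 - Complex.I) : ℂ) • y)) := by
    have him : (star y ⬝ᵥ x - d * (1 - Complex.I) * r).im = (star y ⬝ᵥ x).im + d * r := by simp
    rw [isSelfAdjoint_iff, Complex.star_def, Complex.conj_eq_iff_im, dotProduct_sub,
      dotProduct_smul, ← hr, smul_eq_mul]
    exact him.trans (by rw [hd, div_mul_cancel₀ _ hr_pos.ne', add_neg_cancel])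
  obtain ⟨A, hA, hAy⟩ := exists_isHermitian_mulVec_eq hyy_pos.ne' hself
  obtain ⟨Q, hQ, hQω, hQ_eq⟩ := exists_isAdmissible_evalM_eq_of_isHermitian hω hA
  refine ⟨P + Q, hP.add hQ, not_hasPole_add hPω hQω, ?_⟩
  rw [evalM_add hPω hQω, hP_eq, hQ_eq, add_mulVec, smul_mulVec, one_mulVec, hAy,
    add_sub_cancel]

end Interpolation

/-- robust stability against strictly proper NI uncertainty
without double origin poles implies a frequency-wise output-strict NI bound. -/
theorem robust_stability_implies_osni_bound {n : ℕ} (C : Matrix (Fin n) (Fin n) (RatFunc ℝ)) (hC : MemRHinf C)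
    (hrob : ∀ P : Matrix (Fin n) (Fin n) (RatFunc ℝ), IsNI P → StrictlyProper P → NoDoubleOriginPole P →
      FeedbackStable P C) :
    ∀ ω : ℝ, 0 < ω → ∃ ε : ℝ, 0 < ε ∧
      (Complex.I • (evalM C (jw ω) - (evalM C (jw ω))ᴴ) -
        (ε : ℂ) • ((evalM C (jw ω))ᴴ * evalM C (jw ω))).PosSemidef := by
  intro ω hω
  refine exists_posSemidef_niKer_sub_smul fun x hx => ?_
  by_contra! hform
  have hCω : ¬ HasPole C (jw ω) := fun ⟨i, j, hij⟩ => hC.2 _ (re_jw ω).ge i j hij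
  have hxy : (star (evalM C (jw ω) *ᵥ x) ⬝ᵥ x).im ≤ 0 := by
    rw [star_dotProduct]
    simpa using hform
  obtain ⟨P, hP, hPω, hPx⟩ := exists_isAdmissible_evalM_mulVec_eq hω hx hxy
  have hstable : FeedbackStable P C :=
    hrob P hP.isNI hP.strictlyProper (noDoubleOriginPole_of_not_hasPole_zero hP.not_hasPole_zero)
  have hx_zero : x = 0 := hstable.eq_zero_of_evalM_mulVec_eq (re_jw ω).ge hPω hCω hPx
  exact hx (by rw [hx_zero, mulVec_zero])

end NIControl
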